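/- arXiv:1307.4837 — 2 statements merged into one kernel-verified Lean document; each statement's English description precedes it below -/
import Mathlib

section
/- For positive integers p and q, the group G(p;q) is abelian if and only if q = 1 or p = 1 or p = q = 2. -/
/-- The word `a_{p-1} a_{p-2} ⋯ a_0` in the free group on `Option ℤ`,
where `some k` stands for the generator `a k` and `none` stands for `ω`. -/
def omegaWord (p : ℕ) : FreeGroup (Option ℤ) :=
  ((List.range p).reverse.map (fun i => FreeGroup.of (some (i : ℤ)))).prod

/-- The relators of the group `G(p;q)`:
`ω = a_{p-1}⋯a_0`, `a_{k+q} = a_k` and `a_{k+p} = ω a_k ω⁻¹` for all `k ∈ ℤ`. -/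
def gRels (p q : ℕ) : Set (FreeGroup (Option ℤ)) :=
  {FreeGroup.of none * (omegaWord p)⁻¹} ∪
    (⋃ k : ℤ, {FreeGroup.of (some (k + (q : ℤ))) * (FreeGroup.of (some k))⁻¹}) ∪
    (⋃ k : ℤ, {FreeGroup.of (some (k + (p : ℤ))) *
      (FreeGroup.of none * FreeGroup.of (some k) * (FreeGroup.of none)⁻¹)⁻¹})

/-- The group `G(p;q)`. -/
abbrev Gpq (p q : ℕ) : Type := PresentedGroup (gRels p q)

/-!
The cases `q = 1` and `p = 1` are abelian because all the `a k` coincide: for `q = 1` by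
periodicity, and for `p = 1` because `a n` is the conjugate of `a 0` by a power of `ω = a 0`.
For `p = q = 2` the only generators are `a 0` and `a 1`, and `ω = a 1 * a 0` commutes with `a 0`.

In the remaining cases take roots of unity `x`, `y` of exact orders `p`, `q`, and let `a k` act on
the line by the affine map `z ↦ (x * y) * z + y ^ (k + 1)`. The translation part of the product of
`n` consecutive generators is a geometric sum in `x`, which vanishes for `n = p`, so that `ω` acts
by `z ↦ y ^ p * z` and the relations hold. The images of `a 0` and `a 1` do not commute as soon as
`y ≠ 1` and `x * y ≠ 1`; the latter can be arranged by replacing `y` with `y⁻¹`, unless `x = y` has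
order `2`.
-/

-- In `omegaWord` the coercion `ℕ → ℤ` is elaborated on the whole list, by a monadic lift.
lemma omegaWord_eq_list_prod (p : ℕ) :
    omegaWord p =
      ((List.range p).reverse.map fun i : ℕ => FreeGroup.of (some (i : ℤ))).prod := by
  simp [omegaWord, ← List.map_eq_flatMap, Function.comp_def]

namespace Gpq

section Relations

variable (p q : ℕ)

/-- The generator `a_k` of `G(p;q)`. -/
def a (k : ℤ) : Gpq p q := PresentedGroup.of (some k)

/-- The generator `ω` of `G(p;q)`. -/
def ω : Gpq p q := PresentedGroup.of none

lemma ω_eq_list_prod : ω p q = ((List.range p).reverse.map fun i : ℕ => a p q i).prod := by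
  have h : PresentedGroup.mk (gRels p q) (.of none) = PresentedGroup.mk _ (omegaWord p) :=
    PresentedGroup.mk_eq_mk_of_mul_inv_mem (Or.inl (Or.inl rfl))
  rw [omegaWord_eq_list_prod, map_list_prod, List.map_map] at h
  exact h

lemma a_periodic : Function.Periodic (a p q) (q : ℤ) := fun k =>
  PresentedGroup.mk_eq_mk_of_mul_inv_mem (Or.inl (Or.inr (Set.mem_iUnion.2 ⟨k, rfl⟩)))

lemma a_add_p (k : ℤ) : a p q (k + p) = ω p q * a p q k * (ω p q)⁻¹ :=
  PresentedGroup.mk_eq_mk_of_mul_inv_mem (Or.inr (Set.mem_iUnion.2 ⟨k, rfl⟩))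

lemma closure_range_a : Subgroup.closure (Set.range (a p q)) = ⊤ := by
  rw [eq_top_iff, ← PresentedGroup.closure_range_of, Subgroup.closure_le]
  have a_mem (k : ℤ) : a p q k ∈ Subgroup.closure (Set.range (a p q)) :=
    Subgroup.subset_closure (Set.mem_range_self k)
  rintro _ ⟨_ | k, rfl⟩
  · change ω p q ∈ _
    rw [ω_eq_list_prod]
    refine Subgroup.list_prod_mem _ fun g hg => ?_
    obtain ⟨i, -, rfl⟩ := List.mem_map.1 hg
    exact a_mem i
  · exact a_mem k

end Relations

section Abelian

variable {p q : ℕ}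

lemma mul_comm_of_commute_a (h : ∀ i j, Commute (a p q i) (a p q j)) (g g' : Gpq p q) :
    g * g' = g' * g := by
  have hcomm : IsMulCommutative (Subgroup.closure (Set.range (a p q))) :=
    Subgroup.isMulCommutative_closure (by rintro _ ⟨i, rfl⟩ _ ⟨j, rfl⟩; exact h i j)
  have mem_closure (x : Gpq p q) : x ∈ Subgroup.closure (Set.range (a p q)) :=
    closure_range_a p q ▸ Subgroup.mem_top x
  exact setLike_mul_comm (mem_closure g) (mem_closure g')

lemma mul_comm_of_forall_a_eq (h : ∀ k, a p q k = a p q 0) (g g' : Gpq p q) :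
    g * g' = g' * g :=
  mul_comm_of_commute_a (fun i j => by rw [h i, h j]) g g'

lemma a_emod (k : ℤ) : a p q (k % q) = a p q k := by
  have h := (a_periodic p q).int_mul (k / q) (k % q)
  rwa [Int.cast_id, Int.emod_add_ediv_mul, eq_comm] at h

lemma a_add_mul_p (k n : ℤ) : a p q (k + n * p) = ω p q ^ n * a p q k * (ω p q ^ n)⁻¹ := by
  induction n with
  | zero => simp
  | succ n ih =>
    rw [add_one_mul, ← add_assoc, a_add_p, ih]
    group
  | pred n ih =>
    have h : a p q (k + (-n - 1) * p) = (ω p q)⁻¹ * a p q (k + -n * p) * ω p q := by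
      rw [show k + -n * p = k + (-n - 1) * p + p by ring, a_add_p]
      group
    rw [h, ih]
    group

lemma commute_ω_a_of_dvd (h : q ∣ p) (k : ℤ) : Commute (ω p q) (a p q k) := by
  obtain ⟨m, rfl⟩ := h
  have hk : a (q * m) q (k + (q * m : ℕ)) = a (q * m) q k := by
    simpa [mul_comm] using (a_periodic (q * m) q).nat_mul m k
  exact eq_mul_inv_iff_mul_eq.1 (hk.symm.trans (a_add_p _ _ k)) |>.symm

lemma a_one_left_eq (k : ℤ) : a 1 q k = a 1 q 0 := by
  have hω : ω 1 q = a 1 q 0 := by simp [ω_eq_list_prod]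
  have h := a_add_mul_p (p := 1) (q := q) 0 k
  have hcomm : Commute (a 1 q 0 ^ k) (a 1 q 0) := (Commute.refl _).zpow_left k
  rwa [hω, hcomm.mul_inv_cancel, zero_add, Nat.cast_one, mul_one] at h

lemma a_one_right_eq (k : ℤ) : a p 1 k = a p 1 0 := by
  simpa using (a_emod (p := p) (q := 1) k).symm

lemma commute_a_two_two (i j : ℤ) : Commute (a 2 2 i) (a 2 2 j) := by
  have hω : ω 2 2 = a 2 2 1 * a 2 2 0 := by simp [ω_eq_list_prod, List.range_succ]
  have h : Commute (a 2 2 1) (a 2 2 0) := by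
    have := commute_ω_a_of_dvd (dvd_refl 2) 0
    rw [hω] at this
    simpa using this.mul_left (Commute.refl (a 2 2 0)).inv_left
  rw [← a_emod i, ← a_emod j]
  rcases Int.emod_two_eq_zero_or_one i with hi | hi <;>
    rcases Int.emod_two_eq_zero_or_one j with hj | hj <;>
    simp [hi, hj, h, h.symm]

end Abelian

section Lift

variable {p q : ℕ} {G : Type*} [Group G] {f : ℤ → G} {w : G}

/-- The universal property of `G(p;q)`: elements `f k` and `w` of a group satisfying the defining
relations are the images of `a k` and `ω` under a homomorphism. -/
def lift (hw : w = ((List.range p).reverse.map fun i : ℕ => f i).prod)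
    (hq : Function.Periodic f (q : ℤ)) (hp : ∀ k, f (k + p) = w * f k * w⁻¹) : Gpq p q →* G :=
  PresentedGroup.toGroup (f := fun o => o.elim w f) <| by
    rintro r ((rfl | hr) | hr)
    · simp [omegaWord_eq_list_prod, map_list_prod, Function.comp_def, hw]
    · obtain ⟨k, rfl⟩ := Set.mem_iUnion.1 hr
      simp [hq k]
    · obtain ⟨k, rfl⟩ := Set.mem_iUnion.1 hr
      simp [hp k, mul_assoc]

@[simp]
lemma lift_a (hw : w = ((List.range p).reverse.map fun i : ℕ => f i).prod)
    (hq : Function.Periodic f (q : ℤ)) (hp : ∀ k, f (k + p) = w * f k * w⁻¹) (k : ℤ) :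
    lift hw hq hp (a p q k) = f k :=
  PresentedGroup.toGroup.of _

end Lift

end Gpq

section Affine

variable {R : Type*} [CommRing R]

/-- The affine permutation `z ↦ u * z + b` of a commutative ring. -/
def affinePerm (u : Rˣ) (b : R) : Equiv.Perm R := u.mulLeft.trans (Equiv.addRight b)

@[simp]
lemma affinePerm_apply (u : Rˣ) (b z : R) : affinePerm u b z = u * z + b := rfl

lemma affinePerm_mul (u v : Rˣ) (b c : R) :
    affinePerm u b * affinePerm v c = affinePerm (u * v) (u * c + b) := by
  ext z
  simp [mul_add, mul_assoc, add_assoc]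

lemma commute_affinePerm_iff {u v : Rˣ} {b c : R} :
    Commute (affinePerm u b) (affinePerm v c) ↔ u * c + b = v * b + c := by
  refine ⟨fun h => by simpa using Equiv.congr_fun h 0, fun h => ?_⟩
  rw [Commute, SemiconjBy, affinePerm_mul, affinePerm_mul, mul_comm u v, h]

/-- The affine permutation `z ↦ (x * y) * z + y ^ (k + 1)`, by which the generator `a_k` of `G(p;q)`
acts when `x` and `y` are suitable roots of unity. -/
def affineGen (x y : Rˣ) (k : ℤ) : Equiv.Perm R := affinePerm (x * y) ↑(y ^ (k + 1))

lemma list_prod_affineGen (x y : Rˣ) (n : ℕ) :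
    ((List.range n).reverse.map fun i : ℕ => affineGen x y i).prod =
      affinePerm ((x * y) ^ n) (y ^ n * ∑ i ∈ Finset.range n, (x : R) ^ i) := by
  induction n with
  | zero => ext; simp
  | succ n ih =>
    have hy : ((y ^ (n + 1 : ℤ) : Rˣ) : R) = y ^ (n + 1) := by norm_cast
    rw [List.range_succ, List.reverse_concat, List.map_cons, List.prod_cons, ih, affineGen,
      affinePerm_mul, geom_sum_succ, pow_succ' (x * y), hy, Units.val_mul]
    congr 1
    ring

lemma affineGen_periodic (x : Rˣ) {y : Rˣ} {q : ℕ} (hy : y ^ q = 1) :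
    Function.Periodic (affineGen x y) (q : ℤ) := fun k => by
  rw [affineGen, affineGen, add_right_comm, zpow_add, zpow_natCast, hy, mul_one]

lemma affineGen_add_natCast (x y : Rˣ) (k : ℤ) (n : ℕ) :
    affineGen x y (k + n) = affinePerm (y ^ n) 0 * affineGen x y k * (affinePerm (y ^ n) 0)⁻¹ := by
  rw [eq_mul_inv_iff_mul_eq, affineGen, affineGen, affinePerm_mul, affinePerm_mul, mul_zero,
    zero_add, add_zero, add_right_comm, zpow_add _ _ (n : ℤ), zpow_natCast, mul_comm (y ^ n),
    mul_comm (_ ^ _), Units.val_mul]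

lemma commute_affineGen_zero_one_iff {x y : Rˣ} :
    Commute (affineGen x y 0) (affineGen x y 1) ↔ (((x * y : Rˣ) : R) - 1) * (y - 1) = 0 := by
  have h_sub : ((x * y : Rˣ) : R) * ↑(y ^ (1 + 1 : ℤ)) + ↑(y ^ (0 + 1 : ℤ)) -
      (↑(x * y) * ↑(y ^ (0 + 1 : ℤ)) + ↑(y ^ (1 + 1 : ℤ))) = y * ((↑(x * y) - 1) * (y - 1)) := by
    simp only [zpow_add, zpow_zero, zpow_one, one_mul, Units.val_mul]
    ring
  rw [affineGen, affineGen, commute_affinePerm_iff, ← sub_eq_zero, h_sub,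
    y.isUnit.mul_right_eq_zero]

end Affine

lemma mul_ne_one_or_mul_inv_ne_one_of_isPrimitiveRoot {G : Type*} [DivisionCommMonoid G] {x y : G}
    {p q : ℕ} (hx : IsPrimitiveRoot x p) (hy : IsPrimitiveRoot y q) (hp : p ≠ 1) (hq : q ≠ 1)
    (hpq : ¬ (p = 2 ∧ q = 2)) : x * y ≠ 1 ∨ x * y⁻¹ ≠ 1 := by
  by_contra! ⟨h, h'⟩
  have hxy : x = y := by simpa using eq_inv_of_mul_eq_one_left h'
  subst hxy
  have dvd_two {n : ℕ} (hn : IsPrimitiveRoot x n) : n ∣ 2 := hn.dvd_of_pow_eq_one 2 (sq x ▸ h)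
  exact hpq ⟨((Nat.dvd_prime Nat.prime_two).1 (dvd_two hx)).resolve_left hp,
    ((Nat.dvd_prime Nat.prime_two).1 (dvd_two hy)).resolve_left hq⟩

namespace Gpq

variable {p q : ℕ} {R : Type*} [CommRing R] {x y : Rˣ}

/-- The action of `G(p;q)` on the affine line over `R` by `a k ↦ affineGen x y k`, with `ω` acting
by `z ↦ y ^ p * z`. The hypothesis on `x` makes the translation part of `ω` vanish. -/
def affineRep (hx : ∑ i ∈ Finset.range p, (x : R) ^ i = 0) (hy : y ^ q = 1) :
    Gpq p q →* Equiv.Perm R :=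
  have hω : affinePerm (y ^ p) 0 =
      ((List.range p).reverse.map fun i : ℕ => affineGen x y i).prod := by
    have hxp : x ^ p = 1 := Units.ext <| by
      simpa [hx, eq_comm (a := (0 : R)), sub_eq_zero] using mul_geom_sum (x : R) p
    rw [list_prod_affineGen, mul_pow, hxp, one_mul, hx, mul_zero]
  lift hω (affineGen_periodic x hy) (fun k => affineGen_add_natCast x y k p)

lemma not_commute_a_zero_a_one_of_geom_sum_eq_zero (hx : ∑ i ∈ Finset.range p, (x : R) ^ i = 0)
    (hy : y ^ q = 1) (hxy : (((x * y : Rˣ) : R) - 1) * (y - 1) ≠ 0) :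
    ¬ Commute (a p q 0) (a p q 1) := by
  intro hcomm
  have h := hcomm.map (affineRep hx hy)
  rw [affineRep, lift_a, lift_a, commute_affineGen_zero_one_iff] at h
  exact hxy h

lemma not_commute_a_zero_a_one_of_isPrimitiveRoot [IsDomain R] (hx : IsPrimitiveRoot x p)
    (hy : IsPrimitiveRoot y q) (hp : 1 < p) (hq : q ≠ 1) (hpq : ¬ (p = 2 ∧ q = 2)) :
    ¬ Commute (a p q 0) (a p q 1) := by
  have of_mul_ne_one {z : Rˣ} (hz : IsPrimitiveRoot z q) (hxz : x * z ≠ 1) :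
      ¬ Commute (a p q 0) (a p q 1) := by
    have hz1 : z ≠ 1 := fun h => hq (hz.unique (h ▸ IsPrimitiveRoot.one))
    refine not_commute_a_zero_a_one_of_geom_sum_eq_zero
      ((IsPrimitiveRoot.coe_units_iff.2 hx).geom_sum_eq_zero hp)
      hz.pow_eq_one (mul_ne_zero (sub_ne_zero.2 ?_) (sub_ne_zero.2 ?_))
    · exact mt Units.val_eq_one.1 hxz
    · exact mt Units.val_eq_one.1 hz1
  exact (mul_ne_one_or_mul_inv_ne_one_of_isPrimitiveRoot hx hy hp.ne' hq hpq).elim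
    (of_mul_ne_one hy) (of_mul_ne_one hy.inv)

end Gpq

/-- `G(p;q)` is abelian if and only if `q = 1` or `p = 1` or `p = q = 2`. -/
theorem stmt_7 (p q : ℕ) (hp : 0 < p) (hq : 0 < q) :
    (∀ x y : Gpq p q, x * y = y * x) ↔ (q = 1 ∨ p = 1 ∨ (p = 2 ∧ q = 2)) := by
  constructor
  · intro hcomm
    by_contra! ⟨hq1, hp1, hpq⟩
    have hx := (Complex.isPrimitiveRoot_exp p hp.ne').isUnit_unit hp.ne'
    have hy := (Complex.isPrimitiveRoot_exp q hq.ne').isUnit_unit hq.ne'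
    exact Gpq.not_commute_a_zero_a_one_of_isPrimitiveRoot hx hy (by omega) hq1
      (fun h => hpq h.1 h.2) (hcomm _ _)
  · rintro (rfl | rfl | ⟨rfl, rfl⟩)
    · exact Gpq.mul_comm_of_forall_a_eq Gpq.a_one_right_eq
    · exact Gpq.mul_comm_of_forall_a_eq Gpq.a_one_left_eq
    · exact Gpq.mul_comm_of_commute_a Gpq.commute_a_two_two
end

section
/- For positive integers p, q, r, the group G(p;q;r) is abelian if and only if one of the following holds: (1) gcd(p,q) = gcd(q,r) = 1; (2) p = 1; (3) gcd(p,q) = 2, gcd(q/2, r) = 1 and p = 2. -/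
/-- The relators of the group `G(p;q;r)`: those of `G(p;q)` together with `ω^r = e`. -/
def gRelsProj (p q r : ℕ) : Set (FreeGroup (Option ℤ)) :=
  gRels p q ∪ {(FreeGroup.of none) ^ r}

/-- The group `G(p;q;r)`, the quotient of `G(p;q)` by the relation `ω^r = e`. -/
abbrev Gpqr (p q r : ℕ) : Type := PresentedGroup (gRelsProj p q r)

/-!
Let `d = gcd(p,q)`, `p = p'd`, `q = q'd` and `e = gcd(q',r)`. Adding the relation `ω ^ q' = 1` to
`G(p;q;r)` gives a free product of cyclic groups of orders `e` and `p'` and a free group of rank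
`d - 1`. Indeed `ω` then has a `p'`-th root `u` among its powers, a shift of the indices by `d` is
conjugation by `u`, and `ω = a_{p-1} ⋯ a_0` becomes `(u⁻¹ a_{d-1} ⋯ a_0) ^ p' = 1`; so `ω`,
`b = u⁻¹ a_{d-1} ⋯ a_0` and `a_0, …, a_{d-2}` are free factors. If `G(p;q;r)` is abelian, at most
one of them is nontrivial, and this one is not free of rank at least two. Noncommuting images of
two generators are found in a wreath product of two cyclic groups.

Conversely, `ω ^ q'` is always central, so for `e = 1` the relation `ω ^ r = 1` makes `ω` central
and `a` periodic with period `d`: for `d = 1` there is a single `a_k`, and for `p = d = 2` the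
element `a_1 = ω a_0⁻¹` commutes with `a_0`. For `p = 1` every `a_k` is `ω`.
-/

section DescendingProduct

variable {M N : Type*} [Monoid M] [Monoid N] {G : Type*} [Group G]

/-- The descending product `f (n - 1) * ⋯ * f 1 * f 0`, the shape of the word defining `ω`. -/
def descProd (f : ℤ → M) : ℕ → M
  | 0 => 1
  | n + 1 => f n * descProd f n

theorem map_descProd {F : Type*} [FunLike F M N] [MonoidHomClass F M N] (φ : F) (f : ℤ → M)
    (n : ℕ) : φ (descProd f n) = descProd (fun k => φ (f k)) n := by
  induction n with
  | zero => exact map_one φ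
  | succ n ih => simp only [descProd, map_mul, ih]

theorem descProd_congr {f g : ℤ → M} {n : ℕ} (h : ∀ i : ℕ, i < n → f i = g i) :
    descProd f n = descProd g n := by
  induction n with
  | zero => rfl
  | succ n ih => simp only [descProd, h n n.lt_succ_self, ih fun i hi => h i (by omega)]

theorem descProd_add (f : ℤ → M) (m n : ℕ) :
    descProd f (m + n) = descProd (fun k => f (k + n)) m * descProd f n := by
  induction m with
  | zero => simp [descProd]
  | succ m ih => rw [Nat.add_right_comm, descProd, ih, descProd, mul_assoc, Nat.cast_add]

theorem descProd_conj (u : G) (f : ℤ → G) (n : ℕ) :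
    descProd (fun k => u * f k * u⁻¹) n = u * descProd f n * u⁻¹ :=
  (map_descProd (MulAut.conj u) f n).symm

theorem descProd_mul_of_add_eq_conj {f : ℤ → G} {u : G} {d : ℕ}
    (h : ∀ k, f (k + d) = u * f k * u⁻¹) (n : ℕ) :
    descProd f (n * d) = u ^ n * (u⁻¹ * descProd f d) ^ n := by
  induction n with
  | zero => simp [descProd]
  | succ n ih =>
    calc descProd f ((n + 1) * d)
        = u * (u ^ n * (u⁻¹ * descProd f d) ^ n) * u⁻¹ * descProd f d := by
          rw [Nat.succ_mul, descProd_add]; simp only [h, descProd_conj, ih]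
      _ = u ^ (n + 1) * (u⁻¹ * descProd f d) ^ (n + 1) := by
          rw [pow_succ' u, pow_succ (u⁻¹ * _)]; simp only [mul_assoc]

end DescendingProduct

section ConjugationPeriodic

variable {G : Type*} [Group G]

theorem apply_add_int_mul_eq_conj {f : ℤ → G} {u : G} {d : ℤ}
    (h : ∀ k, f (k + d) = u * f k * u⁻¹) (n k : ℤ) :
    f (k + n * d) = u ^ n * f k * (u ^ n)⁻¹ := by
  have untwisted : Function.Periodic (fun n : ℤ => (u ^ n)⁻¹ * f (k + n * d) * u ^ n) 1 := by
    intro n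
    simp only [add_one_mul, ← add_assoc, h, zpow_add_one]
    group
  have := untwisted.int_mul_eq n
  simp only [Int.cast_id, mul_one, zero_mul, add_zero, zpow_zero, inv_one, one_mul] at this
  rw [← this]
  group

/-- The extension of `g` from `0 ≤ k < d` to all integers for which a shift by `d` becomes
conjugation by `u`. -/
def conjExtend (d : ℤ) (u : G) (g : ℤ → G) (k : ℤ) : G :=
  u ^ (k / d) * g (k % d) * (u ^ (k / d))⁻¹

theorem conjExtend_of_lt {d k : ℤ} (u : G) (g : ℤ → G) (hk : 0 ≤ k) (hkd : k < d) :
    conjExtend d u g k = g k := by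
  simp [conjExtend, Int.ediv_eq_zero_of_lt hk hkd, Int.emod_eq_of_lt hk hkd]

theorem conjExtend_add_self {d : ℤ} (hd : d ≠ 0) (u : G) (g : ℤ → G) (k : ℤ) :
    conjExtend d u g (k + d) = u * conjExtend d u g k * u⁻¹ := by
  simp only [conjExtend, Int.add_ediv_of_dvd_right (dvd_refl d), Int.ediv_self hd,
    Int.add_emod_right, zpow_add_one, (Commute.refl u).zpow_left _ |>.eq]
  group

theorem exists_add_eq_conj_descProd_eq (n : ℕ) (u t : G) (c : ℤ → G) :
    ∃ f : ℤ → G, (∀ k, f (k + (n + 1 : ℕ)) = u * f k * u⁻¹) ∧ (∀ i : ℕ, i < n → f i = c i) ∧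
      descProd f (n + 1) = t := by
  let g := Function.update c n (t * (descProd c n)⁻¹)
  have g_self : g n = t * (descProd c n)⁻¹ := Function.update_self ..
  have f_apply (i : ℕ) (hi : i < n + 1) : conjExtend (n + 1 : ℕ) u g i = g i :=
    conjExtend_of_lt u g (by positivity) (by exact_mod_cast hi)
  have f_lt (i : ℕ) (hi : i < n) : conjExtend (n + 1 : ℕ) u g i = c i := by
    rw [f_apply i (by omega)]
    exact Function.update_of_ne (by exact_mod_cast hi.ne) _ _
  refine ⟨conjExtend (n + 1 : ℕ) u g, conjExtend_add_self (by positivity) u g, f_lt, ?_⟩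
  rw [descProd, f_apply n (by omega), descProd_congr f_lt, g_self, inv_mul_cancel_right]

end ConjugationPeriodic

section Wreath

variable {D Q : Type*} [Group D] [Group Q]

open Classical in
/-- The copy of `D` in the wreath product `D ≀ᵣ Q` supported at the coordinate `1 : Q`. -/
noncomputable def wreathSingle : D →* D ≀ᵣ Q where
  toFun x := ⟨Pi.mulSingle 1 x, 1⟩
  map_one' := by ext <;> simp
  map_mul' x y := by ext <;> simp [Pi.mulSingle_mul]

theorem not_commute_inl_wreathSingle {x : Q} {y : D} (hx : x ≠ 1) (hy : y ≠ 1) :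
    ¬Commute (RegularWreathProduct.inl x) (wreathSingle y : D ≀ᵣ Q) := by
  classical
  intro h
  have := congrFun (congrArg RegularWreathProduct.left h.eq) x
  simp [wreathSingle, Pi.mulSingle_apply, hx, hy] at this

end Wreath

theorem exists_pow_eq_one_not_commute {m n : ℕ} (hm : m ≠ 1) (hn : n ≠ 1) :
    ∃ x y : Multiplicative (ZMod n) ≀ᵣ Multiplicative (ZMod m),
      x ^ m = 1 ∧ y ^ n = 1 ∧ ¬Commute x y := by
  have ofAdd_one_pow (l : ℕ) : (Multiplicative.ofAdd (1 : ZMod l)) ^ l = 1 := by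
    simp [← ofAdd_nsmul]
  have ofAdd_one_ne {l : ℕ} (hl : l ≠ 1) : Multiplicative.ofAdd (1 : ZMod l) ≠ 1 := by
    have := ZMod.nontrivial_iff.2 hl
    simp
  exact ⟨RegularWreathProduct.inl (.ofAdd 1), wreathSingle (.ofAdd 1),
    by rw [← map_pow, ofAdd_one_pow, map_one], by rw [← map_pow, ofAdd_one_pow, map_one],
    not_commute_inl_wreathSingle (ofAdd_one_ne hm) (ofAdd_one_ne hn)⟩

namespace Gpqr

variable {p q r : ℕ} {G : Type*} [Group G] {w : G} {a : ℤ → G}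

/-- The defining relations of `G(p;q;r)`, with `w` in the role of `ω` and `a k` in that of
`a_k`. -/
structure Relations (p q r : ℕ) (w : G) (a : ℤ → G) : Prop where
  descProd_eq : descProd a p = w
  periodic : Function.Periodic a q
  add_eq_conj : ∀ k, a (k + p) = w * a k * w⁻¹
  pow_eq_one : w ^ r = 1

theorem omegaWord_eq_descProd (p : ℕ) :
    omegaWord p = descProd (fun k => FreeGroup.of (some k)) p := by
  induction p with
  | zero => rfl
  | succ p ih => rw [descProd, ← ih]; simp [omegaWord, List.range_succ]

theorem forall_lift_eq_one_iff_relations :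
    (∀ x ∈ gRelsProj p q r, FreeGroup.lift (fun o : Option ℤ => o.elim w a) x = 1) ↔
      Relations p q r w a := by
  have lift_omegaWord : FreeGroup.lift (fun o : Option ℤ => o.elim w a) (omegaWord p) =
      descProd a p := by
    simp [omegaWord_eq_descProd, map_descProd]
  trans w ^ r = 1 ∧ (w = descProd a p ∧ ∀ k, a (k + q) = a k) ∧ ∀ k, a (k + p) = w * a k * w⁻¹
  · simp [gRelsProj, gRels, or_imp, forall_and, mul_inv_eq_one, lift_omegaWord, -mul_inv_rev]
  · exact ⟨fun ⟨hpow, ⟨hprod, hper⟩, hconj⟩ => ⟨hprod.symm, hper, hconj, hpow⟩,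
      fun h => ⟨h.pow_eq_one, ⟨h.descProd_eq.symm, h.periodic⟩, h.add_eq_conj⟩⟩

/-- The generator `ω`. -/
def omega : Gpqr p q r := PresentedGroup.of none

/-- The generator `a_k`. -/
def gen (k : ℤ) : Gpqr p q r := PresentedGroup.of (some k)

theorem relations_omega_gen : Relations p q r (omega : Gpqr p q r) gen := by
  refine forall_lift_eq_one_iff_relations.1 fun x hx => ?_
  have lift_eq_mk : FreeGroup.lift (fun o : Option ℤ => o.elim omega gen) =
      PresentedGroup.mk (gRelsProj p q r) := by
    ext (_ | k) <;> simp [PresentedGroup.of, omega, gen]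
  rw [lift_eq_mk]
  exact PresentedGroup.one_of_mem hx

theorem mul_comm_of_commute_gen (hω : ∀ i, Commute (omega : Gpqr p q r) (gen i))
    (ha : ∀ i j, Commute (gen i : Gpqr p q r) (gen j)) (x y : Gpqr p q r) : x * y = y * x := by
  have closure_comm := Subgroup.isMulCommutative_closure
    (k := Set.range (PresentedGroup.of (rels := gRelsProj p q r))) <| by
      rintro _ ⟨_ | i, rfl⟩ _ ⟨_ | j, rfl⟩
      exacts [rfl, hω j, (hω i).symm, ha i j]
  rw [PresentedGroup.closure_range_of] at closure_comm
  exact setLike_mul_comm (Subgroup.mem_top x) (Subgroup.mem_top y)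

/-- The homomorphism out of `G(p;q;r)` given by elements satisfying its relations. -/
def lift (h : Relations p q r w a) : Gpqr p q r →* G :=
  PresentedGroup.toGroup (forall_lift_eq_one_iff_relations.2 h)

theorem lift_omega (h : Relations p q r w a) : lift h omega = w :=
  PresentedGroup.toGroup.of _

theorem lift_gen (h : Relations p q r w a) (k : ℤ) : lift h (gen k) = a k :=
  PresentedGroup.toGroup.of _

namespace Relations

theorem commute_of_dvd_of_coprime (h : Relations p q r w a) {n : ℕ} (hdvd : q ∣ n * p)
    (hcop : n.Coprime r) (k : ℤ) : Commute w (a k) := by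
  obtain ⟨s, hs⟩ := hdvd
  have pow_commute : Commute (w ^ n) (a k) := by
    have shift := apply_add_int_mul_eq_conj h.add_eq_conj n k
    have : (n : ℤ) * p = s * q := by exact_mod_cast hs.trans (mul_comm q s)
    rw [this, show a (k + s * q) = a k from h.periodic.nat_mul s k, zpow_natCast] at shift
    exact (eq_mul_inv_iff_mul_eq.1 shift).symm
  obtain ⟨m, hm⟩ := exists_pow_eq_self_of_coprime
    (hcop.coprime_dvd_right (orderOf_dvd_of_pow_eq_one h.pow_eq_one))
  exact hm ▸ pow_commute.pow_left m

theorem periodic_gcd (h : Relations p q r w a) (hw : ∀ k, Commute w (a k)) :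
    Function.Periodic a (p.gcd q) := by
  have periodic_p : Function.Periodic a p := fun k => by
    rw [h.add_eq_conj, (hw k).eq, mul_inv_cancel_right]
  rw [Nat.gcd_eq_gcd_ab, mul_comm, mul_comm (q : ℤ)]
  exact (periodic_p.int_mul _).add_period (h.periodic.int_mul _)

theorem apply_eq_of_one (h : Relations 1 q r w a) (k : ℤ) : a k = w := by
  have a_zero : a 0 = w := by simpa [descProd] using h.descProd_eq
  have := apply_add_int_mul_eq_conj h.add_eq_conj k 0
  simpa [a_zero, (Commute.refl w).zpow_left k |>.eq] using this

theorem apply_commute_of_two (h : Relations 2 q r w a) (hq : 2 ∣ q)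
    (hw : ∀ k, Commute w (a k)) (i j : ℤ) : Commute (a i) (a j) := by
  have periodic_two : Function.Periodic a (2 : ℕ) := Nat.gcd_eq_left hq ▸ h.periodic_gcd hw
  have apply_emod (k : ℤ) : a k = a (k % 2) := by
    conv_lhs => rw [← Int.emod_add_mul_ediv k 2, mul_comm]
    exact periodic_two.int_mul (k / 2) (k % 2)
  have one_zero : Commute (a 1) (a 0) := by
    have one_eq : a 1 = w * (a 0)⁻¹ := by simp [← h.descProd_eq, descProd]
    rw [one_eq]
    exact (hw 0).mul_left (Commute.refl (a 0)).inv_left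
  rw [apply_emod i, apply_emod j]
  rcases Int.emod_two_eq_zero_or_one i with hi | hi <;>
    rcases Int.emod_two_eq_zero_or_one j with hj | hj <;> rw [hi, hj]
  exacts [one_zero.symm, one_zero]

theorem of_add_eq_conj {u : G} {p' q' d : ℕ} (hshift : ∀ k, a (k + d) = u * a k * u⁻¹)
    (hup : u ^ p' = w) (huq : u ^ q' = 1) (hwr : w ^ r = 1)
    (hprod : (u⁻¹ * descProd a d) ^ p' = 1) : Relations (p' * d) (q' * d) r w a where
  descProd_eq := by rw [descProd_mul_of_add_eq_conj hshift, hprod, hup, mul_one]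
  periodic k := by
    have := apply_add_int_mul_eq_conj hshift q' k
    simpa [huq] using this
  add_eq_conj k := by
    have := apply_add_int_mul_eq_conj hshift p' k
    simpa [hup] using this
  pow_eq_one := hwr

end Relations

theorem mul_comm_of_coprime (hpq : p.Coprime q) (hqr : q.Coprime r) :
    ∀ x y : Gpqr p q r, x * y = y * x := by
  have hω (k : ℤ) : Commute (omega : Gpqr p q r) (gen k) :=
    relations_omega_gen.commute_of_dvd_of_coprime (dvd_mul_right q p) hqr k
  have gen_eq (k : ℤ) : (gen k : Gpqr p q r) = gen 0 := by
    have periodic_one := relations_omega_gen.periodic_gcd hω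
    rw [hpq] at periodic_one
    simpa using periodic_one.int_mul_eq k
  exact mul_comm_of_commute_gen hω fun i j => by rw [gen_eq i, gen_eq j]

theorem mul_comm_of_one : ∀ x y : Gpqr 1 q r, x * y = y * x :=
  mul_comm_of_commute_gen (fun i => by rw [relations_omega_gen.apply_eq_of_one i])
    fun i j => by rw [relations_omega_gen.apply_eq_of_one i, relations_omega_gen.apply_eq_of_one j]

theorem mul_comm_of_two (hq : 2 ∣ q) (hqr : (q / 2).Coprime r) :
    ∀ x y : Gpqr 2 q r, x * y = y * x := by
  have hω (k : ℤ) : Commute (omega : Gpqr 2 q r) (gen k) :=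
    relations_omega_gen.commute_of_dvd_of_coprime (Nat.div_mul_cancel hq).symm.dvd hqr k
  exact mul_comm_of_commute_gen hω (relations_omega_gen.apply_commute_of_two hq hω)

theorem exists_monoidHom_mem_range {p' q' n : ℕ} (hcop : p'.Coprime q') {b : G}
    (hwq : w ^ q' = 1) (hwr : w ^ r = 1) (hb : b ^ p' = 1) (c : ℤ → G) :
    ∃ φ : Gpqr (p' * (n + 1)) (q' * (n + 1)) r →* G,
      w ∈ φ.range ∧ b ∈ φ.range ∧ ∀ i : ℕ, i < n → c i ∈ φ.range := by
  obtain ⟨m, hm⟩ := exists_pow_eq_self_of_coprime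
    (hcop.coprime_dvd_right (orderOf_dvd_of_pow_eq_one hwq))
  have root_pow : (w ^ m) ^ p' = w := by rw [pow_right_comm, hm]
  have root_pow_eq_one : (w ^ m) ^ q' = 1 := by rw [pow_right_comm, hwq, one_pow]
  obtain ⟨a, hshift, hc, hprod⟩ := exists_add_eq_conj_descProd_eq n (w ^ m) (w ^ m * b) c
  have rel : Relations (p' * (n + 1)) (q' * (n + 1)) r w a :=
    .of_add_eq_conj hshift root_pow root_pow_eq_one hwr (by rw [hprod, inv_mul_cancel_left, hb])
  refine ⟨lift rel, ⟨omega, lift_omega rel⟩, ⟨(omega ^ m)⁻¹ * descProd gen (n + 1), ?_⟩,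
    fun i hi => ⟨gen i, (lift_gen rel i).trans (hc i hi)⟩⟩
  simp only [map_mul, map_inv, map_pow, map_descProd, lift_omega, lift_gen, hprod,
    inv_mul_cancel_left]

theorem commute_of_mem_range (hab : ∀ x y : Gpqr p q r, x * y = y * x) {φ : Gpqr p q r →* G}
    {x y : G} (hx : x ∈ φ.range) (hy : y ∈ φ.range) : Commute x y := by
  obtain ⟨x, rfl⟩ := hx
  obtain ⟨y, rfl⟩ := hy
  exact Commute.map (hab x y) φ

theorem gcd_eq_one_or_eq_one_of_mul_comm {p' q' n : ℕ} (hcop : p'.Coprime q')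
    (hab : ∀ x y : Gpqr (p' * (n + 1)) (q' * (n + 1)) r, x * y = y * x) :
    q'.gcd r = 1 ∨ p' = 1 := by
  by_contra! hne
  obtain ⟨x, y, hx, hy, hxy⟩ := exists_pow_eq_one_not_commute hne.1 hne.2
  obtain ⟨hxq, hxr⟩ := pow_gcd_eq_one.1 hx
  obtain ⟨φ, hxφ, hyφ, -⟩ := exists_monoidHom_mem_range (n := n) hcop hxq hxr hy 1
  exact hxy (commute_of_mem_range hab hxφ hyφ)

theorem gcd_eq_one_of_mul_comm {p' q' n : ℕ} (hcop : p'.Coprime q') (hn : 0 < n)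
    (hab : ∀ x y : Gpqr (p' * (n + 1)) (q' * (n + 1)) r, x * y = y * x) : q'.gcd r = 1 := by
  by_contra hne
  obtain ⟨x, y, hx, -, hxy⟩ := exists_pow_eq_one_not_commute hne zero_ne_one
  obtain ⟨hxq, hxr⟩ := pow_gcd_eq_one.1 hx
  obtain ⟨φ, hxφ, -, hyφ⟩ := exists_monoidHom_mem_range hcop hxq hxr (one_pow p') fun _ => y
  exact hxy (commute_of_mem_range hab hxφ (hyφ 0 hn))

theorem eq_one_of_mul_comm {p' q' n : ℕ} (hcop : p'.Coprime q') (hn : 0 < n)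
    (hab : ∀ x y : Gpqr (p' * (n + 1)) (q' * (n + 1)) r, x * y = y * x) : p' = 1 := by
  by_contra hne
  obtain ⟨x, y, hx, -, hxy⟩ := exists_pow_eq_one_not_commute hne zero_ne_one
  obtain ⟨φ, -, hxφ, hyφ⟩ :=
    exists_monoidHom_mem_range hcop (one_pow q') (one_pow r) hx fun _ => y
  exact hxy (commute_of_mem_range hab hxφ (hyφ 0 hn))

theorem lt_two_of_mul_comm {p' q' n : ℕ} (hcop : p'.Coprime q')
    (hab : ∀ x y : Gpqr (p' * (n + 1)) (q' * (n + 1)) r, x * y = y * x) : n < 2 := by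
  by_contra! hn
  obtain ⟨x, y, -, -, hxy⟩ := exists_pow_eq_one_not_commute zero_ne_one zero_ne_one
  obtain ⟨φ, -, -, hφ⟩ := exists_monoidHom_mem_range hcop (one_pow q') (one_pow r) (one_pow p')
    fun i => if i = 0 then x else y
  exact hxy (commute_of_mem_range hab (hφ 0 (by omega)) (hφ 1 (by omega)))

end Gpqr

/-- `G(p;q;r)` is abelian if and only if `gcd(p,q) = gcd(q,r) = 1`, or `p = 1`, or
`gcd(p,q) = 2`, `gcd(q/2,r) = 1` and `p = 2`. -/
theorem stmt_11 (p q r : ℕ) (hp : 0 < p) (hq : 0 < q) (hr : 0 < r) :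
    (∀ x y : Gpqr p q r, x * y = y * x) ↔
      ((Nat.gcd p q = 1 ∧ Nat.gcd q r = 1) ∨ p = 1 ∨
        (Nat.gcd p q = 2 ∧ Nat.gcd (q / 2) r = 1 ∧ p = 2)) := by
  constructor
  · intro hab
    obtain ⟨p', q', hcop, hp', hq'⟩ := Nat.exists_coprime p q
    obtain ⟨n, hn⟩ := Nat.exists_eq_succ_of_ne_zero (Nat.gcd_pos_of_pos_left q hp).ne'
    rw [hn] at hp' hq' ⊢
    subst hp' hq'
    have n_lt_two := Gpqr.lt_two_of_mul_comm hcop hab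
    interval_cases n
    · simpa using Gpqr.gcd_eq_one_or_eq_one_of_mul_comm hcop hab
    · obtain rfl := Gpqr.eq_one_of_mul_comm hcop one_pos hab
      simpa using Gpqr.gcd_eq_one_of_mul_comm hcop one_pos hab
  · rintro (⟨hpq, hqr⟩ | rfl | ⟨hpq, hqr, rfl⟩)
    · exact Gpqr.mul_comm_of_coprime hpq hqr
    · exact Gpqr.mul_comm_of_one
    · exact Gpqr.mul_comm_of_two (hpq ▸ Nat.gcd_dvd_right 2 q) hqr
end
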